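/- Under the hypotheses of the preceding estimate (T' = {0 ≤ η ≤ ξ ≤ 1}; N ≥ max{1, |p₁|, |p₂|, |q₁|, |q₂|}; δ, δ_c power series in t on [0,1) with continuous coefficients bounded by N; G₀, G_{c,0}, G_{n+1}, G_{c,n+1} defined by the stated recursion), the series G := Σ_{n≥0} Gₙ and G_c := Σ_{n≥0} G_{c,n} converge absolutely and uniformly on T'×[0,t₀] for every t₀ ∈ (0,1), their sums satisfy the integral equations G(ξ,η,t) = G₀(ξ,η,t) + ∫_η^ξ∫₀^η [(δ+p₁∂/∂t)G + (δ_c+p₂∂/∂t)G_c](τ,s,t) ds dτ and G_c(ξ,η,t) = G_{c,0}(ξ,η,t) + ∫_η^ξ∫₀^η [(δ+q₁∂/∂t)G_c + (−δ_c+q₂∂/∂t)G](τ,s,t) ds dτ, and, setting M := N/(1−t₀), the functions k(x,y,t) := G((x+y)/2,(x−y)/2,t) and k_c(x,y,t) := G_c((x+y)/2,(x−y)/2,t) satisfy |k(x,y,t)| ≤ M e^{M(x²−y²)} and |k_c(x,y,t)| ≤ M e^{M(x²−y²)} for all 0 ≤ y ≤ x ≤ 1 and t ∈ (0,t₀). 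-/

import Mathlib

open Set intervalIntegral Filter

/-- The triangle `T' = {(ξ,η) : 0 ≤ η ≤ ξ ≤ 1}`. -/
def Tri : Set (ℝ × ℝ) := {p : ℝ × ℝ | 0 ≤ p.2 ∧ p.2 ≤ p.1 ∧ p.1 ≤ 1}

/-- Partial derivative in the last (time) variable. -/
noncomputable def pT (G : ℝ → ℝ → ℝ → ℝ) (ξ η t : ℝ) : ℝ := deriv (fun t' => G ξ η t') t

/-! ### Power series with binomially bounded coefficients -/

lemma hasSum_choose_mul_pow (n : ℕ) (C : ℝ) {t : ℝ} (ht : |t| < 1) :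
    HasSum (fun k : ℕ => C * ((k + n).choose n : ℝ) * t ^ k) (C * (1 / (1 - t) ^ (n + 1))) := by
  simpa only [mul_assoc] using
    (hasSum_choose_mul_geometric_of_norm_lt_one n (r := t) (by simpa using ht)).mul_left C

lemma summable_norm_of_abs_le_choose {n : ℕ} {C : ℝ} {c : ℕ → ℝ}
    (hc : ∀ k, |c k| ≤ C * ((k + n).choose n : ℝ)) {t : ℝ} (ht : |t| < 1) :
    Summable (fun k => ‖c k * t ^ k‖) := by
  refine .of_nonneg_of_le (fun _ => norm_nonneg _) (fun k => ?_)
    (hasSum_choose_mul_pow n C (t := |t|) (by simpa using ht)).summable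
  rw [norm_mul, norm_pow, Real.norm_eq_abs, Real.norm_eq_abs]
  exact mul_le_mul_of_nonneg_right (hc k) (by positivity)

lemma abs_le_of_hasSum_choose {n : ℕ} {C : ℝ} {c : ℕ → ℝ}
    (hc : ∀ k, |c k| ≤ C * ((k + n).choose n : ℝ)) {t S : ℝ} (ht : t ∈ Ioo (0 : ℝ) 1)
    (hS : HasSum (fun k => c k * t ^ k) S) : |S| ≤ C * (1 / (1 - t) ^ (n + 1)) := by
  have ht' : |t| < 1 := by rw [abs_of_pos ht.1]; exact ht.2
  rw [← hS.tsum_eq, ← Real.norm_eq_abs]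
  refine tsum_of_norm_bounded (hasSum_choose_mul_pow n C ht') fun k => ?_
  rw [norm_mul, norm_pow, Real.norm_eq_abs, Real.norm_eq_abs, abs_of_pos ht.1]
  exact mul_le_mul_of_nonneg_right (hc k) (pow_nonneg ht.1.le _)

lemma succ_mul_choose_eq (n k : ℕ) :
    ((k : ℝ) + 1) * ((k + 1 + n).choose n : ℝ)
      = ((n : ℝ) + 1) * ((k + (n + 1)).choose (n + 1) : ℝ) := by
  have h := Nat.choose_succ_right_eq (k + 1 + n) n
  rw [Nat.add_sub_cancel] at h
  have e : k + 1 + n = k + (n + 1) := by ring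
  rw [e] at h ⊢
  have h' : (((k + (n + 1)).choose (n + 1) : ℕ) : ℝ) * ((n : ℝ) + 1)
      = ((k + (n + 1)).choose n : ℝ) * ((k : ℝ) + 1) := by exact_mod_cast h
  linarith

lemma abs_deriv_coeff_le {n : ℕ} {C : ℝ} {c : ℕ → ℝ}
    (hc : ∀ k, |c k| ≤ C * ((k + n).choose n : ℝ)) (k : ℕ) :
    |((k : ℝ) + 1) * c (k + 1)| ≤ (((n : ℝ) + 1) * C) * ((k + (n + 1)).choose (n + 1) : ℝ) := by
  rw [abs_mul, abs_of_nonneg (by positivity : (0 : ℝ) ≤ (k : ℝ) + 1)]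
  calc ((k : ℝ) + 1) * |c (k + 1)| ≤ ((k : ℝ) + 1) * (C * ((k + 1 + n).choose n : ℝ)) := by
        gcongr; exact hc (k + 1)
    _ = C * (((k : ℝ) + 1) * ((k + 1 + n).choose n : ℝ)) := by ring
    _ = _ := by rw [succ_mul_choose_eq]; ring

lemma hasDerivAt_tsum_mul_pow {n : ℕ} {C : ℝ} {c : ℕ → ℝ}
    (hc : ∀ k, |c k| ≤ C * ((k + n).choose n : ℝ)) {t : ℝ} (ht : |t| < 1) :
    HasDerivAt (fun t => ∑' k, c k * t ^ k) (∑' k : ℕ, ((k : ℝ) + 1) * c (k + 1) * t ^ k) t := by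
  obtain ⟨r, htr, hr1⟩ := exists_between ht
  have hr0 : 0 < r := (abs_nonneg t).trans_lt htr
  have hs : Summable (fun k : ℕ => ‖(k : ℝ) * c k * r ^ (k - 1)‖) := by
    rw [← summable_nat_add_iff 1]
    simpa using summable_norm_of_abs_le_choose (abs_deriv_coeff_le hc) (t := r)
      (by rwa [abs_of_pos hr0])
  have key := hasDerivAt_tsum_of_isPreconnected (t := Ioo (-r) r) (y₀ := 0) (y := t)
    (g := fun k t => c k * t ^ k) (g' := fun (k : ℕ) t => (k : ℝ) * c k * t ^ (k - 1))
    hs isOpen_Ioo isPreconnected_Ioo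
    (fun k y _ => by simpa [mul_assoc, mul_left_comm] using (hasDerivAt_pow k y).const_mul (c k))
    (fun k y hy => by
      rw [norm_mul, norm_mul _ (r ^ (k - 1)), norm_pow, norm_pow]
      gcongr
      rw [Real.norm_eq_abs, Real.norm_eq_abs, abs_of_pos hr0]
      exact (abs_lt.2 hy).le)
    ⟨by linarith, hr0⟩ (summable_norm_of_abs_le_choose hc (by simp)).of_norm (abs_lt.1 htr)
  have hs' : Summable (fun k : ℕ => (k : ℝ) * c k * t ^ (k - 1)) := by
    rw [← summable_nat_add_iff 1]
    simpa using (summable_norm_of_abs_le_choose (abs_deriv_coeff_le hc) ht).of_norm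
  rw [hs'.tsum_eq_zero_add] at key
  simpa using key

lemma abs_antidiagonal_coeff_le {n : ℕ} {B C : ℝ} {b c : ℕ → ℝ} (hb : ∀ k, |b k| ≤ B)
    (hc : ∀ k, |c k| ≤ C * ((k + n).choose n : ℝ)) (k : ℕ) :
    |∑ p ∈ Finset.HasAntidiagonal.antidiagonal k, b p.1 * c p.2|
      ≤ B * C * ((k + (n + 1)).choose (n + 1) : ℝ) := by
  have hB : 0 ≤ B := (abs_nonneg _).trans (hb 0)
  calc |∑ p ∈ Finset.HasAntidiagonal.antidiagonal k, b p.1 * c p.2|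
      ≤ ∑ p ∈ Finset.HasAntidiagonal.antidiagonal k, |b p.1 * c p.2| :=
        Finset.abs_sum_le_sum_abs _ _
    _ ≤ ∑ p ∈ Finset.HasAntidiagonal.antidiagonal k, B * (C * ((p.2 + n).choose n : ℝ)) := by
        refine Finset.sum_le_sum fun p _ => ?_
        rw [abs_mul]
        exact mul_le_mul (hb _) (hc _) (abs_nonneg _) hB
    _ = ∑ p ∈ Finset.HasAntidiagonal.antidiagonal k, B * (C * ((p.1 + n).choose n : ℝ)) :=
        Finset.Nat.sum_antidiagonal_swap (f := fun p => B * (C * ((p.1 + n).choose n : ℝ)))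
    _ = B * C * ((k + (n + 1)).choose (n + 1) : ℝ) := by
        rw [Finset.Nat.sum_antidiagonal_eq_sum_range_succ
          (fun i _ => B * (C * ((i + n).choose n : ℝ))), ← Finset.mul_sum, ← Finset.mul_sum,
          ← mul_assoc, ← add_assoc, ← Nat.sum_range_add_choose]
        push_cast
        rfl

/-! ### Iterated integrals over the triangle -/

/-- A continuous retraction of the plane onto `Tri`. -/
noncomputable def triRetract (p : ℝ × ℝ) : ℝ × ℝ :=
  (max 0 (min p.1 1), max 0 (min p.2 (max 0 (min p.1 1))))

lemma continuous_triRetract : Continuous triRetract := by unfold triRetract; fun_prop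

lemma triRetract_mem (p : ℝ × ℝ) : triRetract p ∈ Tri :=
  ⟨le_max_left _ _, max_le (le_max_left _ _) (min_le_right _ _),
    max_le zero_le_one (min_le_right _ _)⟩

lemma triRetract_eq {p : ℝ × ℝ} (hp : p ∈ Tri) : triRetract p = p := by
  obtain ⟨h0, h1, h2⟩ := hp
  have e : max 0 (min p.1 1) = p.1 := by rw [min_eq_left h2, max_eq_right (h0.trans h1)]
  simp only [triRetract, e, min_eq_left h1, max_eq_right h0]

lemma mem_Tri_of_rectangle {ξ η τ s : ℝ} (h : (ξ, η) ∈ Tri) (hτ : τ ∈ Icc η ξ)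
    (hs : s ∈ Icc 0 η) : (τ, s) ∈ Tri :=
  ⟨hs.1, hs.2.trans hτ.1, hτ.2.trans h.2.2⟩

lemma rectangleIntegral_congr {ξ η : ℝ} (h : (ξ, η) ∈ Tri) {f g : ℝ → ℝ → ℝ}
    (hfg : ∀ τ s, (τ, s) ∈ Tri → f τ s = g τ s) :
    ∫ τ in η..ξ, ∫ s in (0 : ℝ)..η, f τ s = ∫ τ in η..ξ, ∫ s in (0 : ℝ)..η, g τ s := by
  refine integral_congr fun τ hτ => integral_congr fun s hs => ?_
  rw [uIcc_of_le h.2.1] at hτ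
  rw [uIcc_of_le h.1] at hs
  exact hfg _ _ (mem_Tri_of_rectangle h hτ hs)

lemma continuousOn_rectangleIntegral {f : ℝ → ℝ → ℝ}
    (hf : ContinuousOn (fun p : ℝ × ℝ => f p.1 p.2) Tri) :
    ContinuousOn (fun p : ℝ × ℝ => ∫ τ in p.2..p.1, ∫ s in (0 : ℝ)..p.2, f τ s) Tri := by
  have hc : Continuous fun p : ℝ × ℝ => f (triRetract p).1 (triRetract p).2 :=
    hf.comp_continuous continuous_triRetract triRetract_mem
  have hin : Continuous fun q : (ℝ × ℝ) × ℝ =>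
      ∫ s in (0 : ℝ)..q.1.2, f (triRetract (q.2, s)).1 (triRetract (q.2, s)).2 :=
    continuous_parametric_intervalIntegral_of_continuous
      (f := fun (q : (ℝ × ℝ) × ℝ) s => f (triRetract (q.2, s)).1 (triRetract (q.2, s)).2)
      (hc.comp (by fun_prop : Continuous fun z : ((ℝ × ℝ) × ℝ) × ℝ => (z.1.2, z.2)))
      (by fun_prop)
  have hout : Continuous fun p : ℝ × ℝ => ∫ τ in p.2..p.1, ∫ s in (0 : ℝ)..p.2,
      f (triRetract (τ, s)).1 (triRetract (τ, s)).2 := by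
    have e : ∀ p : ℝ × ℝ, (∫ τ in p.2..p.1, ∫ s in (0 : ℝ)..p.2,
        f (triRetract (τ, s)).1 (triRetract (τ, s)).2)
        = (∫ τ in (0 : ℝ)..p.1, ∫ s in (0 : ℝ)..p.2,
          f (triRetract (τ, s)).1 (triRetract (τ, s)).2)
        - ∫ τ in (0 : ℝ)..p.2, ∫ s in (0 : ℝ)..p.2,
          f (triRetract (τ, s)).1 (triRetract (τ, s)).2 := fun p => by
      have hi : Continuous fun τ => ∫ s in (0 : ℝ)..p.2,
          f (triRetract (τ, s)).1 (triRetract (τ, s)).2 :=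
        hin.comp (by fun_prop : Continuous fun τ : ℝ => (p, τ))
      rw [integral_interval_sub_left (hi.intervalIntegrable _ _) (hi.intervalIntegrable _ _)]
    simp only [e]
    exact (continuous_parametric_intervalIntegral_of_continuous hin continuous_fst).sub
      (continuous_parametric_intervalIntegral_of_continuous hin continuous_snd)
  refine hout.continuousOn.congr fun p hp => rectangleIntegral_congr hp fun τ s hτs => ?_
  rw [triRetract_eq hτs]

lemma hasSum_intervalIntegral_of_norm_le {a b : ℝ} {f : ℕ → ℝ → ℝ} {u : ℕ → ℝ}
    (hf : ∀ n, Continuous (f n)) (hu : Summable u) (hfu : ∀ n x, ‖f n x‖ ≤ u n) :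
    HasSum (fun n => ∫ x in a..b, f n x) (∫ x in a..b, ∑' n, f n x) :=
  hasSum_integral_of_dominated_convergence (fun n _ => u n)
    (fun n => (hf n).aestronglyMeasurable) (fun n => .of_forall fun x _ => hfu n x)
    (.of_forall fun _ _ => hu) (by simp)
    (.of_forall fun x _ => (Summable.of_norm_bounded hu fun n => hfu n x).hasSum)

lemma hasSum_rectangleIntegral {ξ η : ℝ} (h : (ξ, η) ∈ Tri) {f : ℕ → ℝ → ℝ → ℝ}
    {F : ℝ → ℝ → ℝ} {u : ℕ → ℝ}
    (hf : ∀ n, ContinuousOn (fun p : ℝ × ℝ => f n p.1 p.2) Tri) (hu : Summable u)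
    (hfu : ∀ n τ s, (τ, s) ∈ Tri → |f n τ s| ≤ u n)
    (hF : ∀ τ s, (τ, s) ∈ Tri → HasSum (fun n => f n τ s) (F τ s)) :
    HasSum (fun n => ∫ τ in η..ξ, ∫ s in (0 : ℝ)..η, f n τ s)
      (∫ τ in η..ξ, ∫ s in (0 : ℝ)..η, F τ s) := by
  set g : ℕ → ℝ → ℝ → ℝ := fun n τ s => f n (triRetract (τ, s)).1 (triRetract (τ, s)).2 with hg
  have hgc : ∀ n, Continuous (Function.uncurry (g n)) := fun n =>
    (hf n).comp_continuous continuous_triRetract triRetract_mem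
  have hgu : ∀ n τ s, ‖g n τ s‖ ≤ u n := fun n τ s => hfu n _ _ (triRetract_mem (τ, s))
  have hin : ∀ τ, HasSum (fun n => ∫ s in (0 : ℝ)..η, g n τ s) (∫ s in (0 : ℝ)..η, ∑' n, g n τ s) :=
    fun τ => hasSum_intervalIntegral_of_norm_le
      (fun n => (hgc n).comp (by fun_prop : Continuous fun s : ℝ => (τ, s))) hu fun n => hgu n τ
  have hout := hasSum_intervalIntegral_of_norm_le (a := η) (b := ξ)
    (f := fun n τ => ∫ s in (0 : ℝ)..η, g n τ s)
    (fun n => continuous_parametric_intervalIntegral_of_continuous' (hgc n) 0 η)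
    (hu.mul_right |η - 0|)
    (fun n τ => norm_integral_le_of_norm_le_const fun s _ => hgu n τ s)
  have hgf : ∀ n τ s, (τ, s) ∈ Tri → g n τ s = f n τ s := fun n τ s hτs => by
    simp only [hg, triRetract_eq hτs]
  convert hout using 1
  · funext n
    exact rectangleIntegral_congr h fun τ s hτs => (hgf n τ s hτs).symm
  · simp only [(hin _).tsum_eq]
    refine rectangleIntegral_congr h fun τ s hτs => ?_
    simp only [hgf _ τ s hτs, (hF τ s hτs).tsum_eq]

lemma abs_rectangleIntegral_le {ξ η : ℝ} (h : (ξ, η) ∈ Tri) {f : ℝ → ℝ → ℝ} {A : ℝ} (hA : 0 ≤ A)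
    {m : ℕ} (hf : ∀ τ s, (τ, s) ∈ Tri → |f τ s| ≤ A * (τ * s) ^ m) :
    |∫ τ in η..ξ, ∫ s in (0 : ℝ)..η, f τ s| ≤ A / ((m : ℝ) + 1) ^ 2 * (ξ * η) ^ (m + 1) := by
  have hin : ∀ τ ∈ Ioc η ξ, ‖∫ s in (0 : ℝ)..η, f τ s‖
      ≤ A * η ^ (m + 1) / ((m : ℝ) + 1) * τ ^ m := fun τ hτ => by
    refine (norm_integral_le_of_norm_le (g := fun s => A * τ ^ m * s ^ m) h.1
      (.of_forall fun s hs => ?_) ((by fun_prop : Continuous _).intervalIntegrable _ _)).trans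
      (le_of_eq ?_)
    · rw [mul_assoc, ← mul_pow]
      exact hf _ _ (mem_Tri_of_rectangle h (Ioc_subset_Icc_self hτ) (Ioc_subset_Icc_self hs))
    · rw [integral_const_mul, integral_pow]
      ring
  refine (norm_integral_le_of_norm_le h.2.1 (.of_forall hin)
    ((by fun_prop : Continuous _).intervalIntegrable _ _)).trans ?_
  have hη : 0 ≤ η := h.1
  rw [integral_const_mul, integral_pow]
  calc A * η ^ (m + 1) / ((m : ℝ) + 1) * ((ξ ^ (m + 1) - η ^ (m + 1)) / ((m : ℝ) + 1))
      ≤ A * η ^ (m + 1) / ((m : ℝ) + 1) * (ξ ^ (m + 1) / ((m : ℝ) + 1)) := by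
        gcongr
        exact sub_le_self _ (by positivity)
    _ = _ := by rw [mul_pow]; field_simp

/-! ### Functions with a power series expansion in time and a binomial majorant -/

/-- On `Tri × (0,1)` the function `F` is a power series in the last variable with continuous
coefficients, termwise dominated by the power series of `A (ξη)ᵐ (1 - t)⁻⁽ⁿ⁺¹⁾`. -/
def HasMajorant (m n : ℕ) (A : ℝ) (F : ℝ → ℝ → ℝ → ℝ) : Prop :=
  ∃ a : ℕ → ℝ → ℝ → ℝ,
    (∀ k, ContinuousOn (fun p : ℝ × ℝ => a k p.1 p.2) Tri) ∧
    (∀ ξ η, (ξ, η) ∈ Tri → ∀ k, |a k ξ η| ≤ A * (ξ * η) ^ m * ((k + n).choose n : ℝ)) ∧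
    ∀ ξ η, (ξ, η) ∈ Tri → ∀ t ∈ Ioo (0 : ℝ) 1, HasSum (fun k => a k ξ η * t ^ k) (F ξ η t)

lemma mul_nonneg_of_mem_Tri {ξ η : ℝ} (h : (ξ, η) ∈ Tri) : 0 ≤ ξ * η :=
  mul_nonneg (h.1.trans h.2.1) h.1

lemma mul_le_one_of_mem_Tri {ξ η : ℝ} (h : (ξ, η) ∈ Tri) : ξ * η ≤ 1 :=
  mul_le_one₀ h.2.2 h.1 (h.2.1.trans h.2.2)

lemma abs_lt_one_of_mem_Ioo {t : ℝ} (ht : t ∈ Ioo (0 : ℝ) 1) : |t| < 1 :=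
  abs_lt.2 ⟨by linarith [ht.1], ht.2⟩

namespace HasMajorant

variable {m n : ℕ} {A B c : ℝ} {E F H : ℝ → ℝ → ℝ → ℝ}

lemma const_nonneg (hF : HasMajorant m n A F) : 0 ≤ A := by
  obtain ⟨a, -, hb, -⟩ := hF
  simpa using (abs_nonneg _).trans (hb 1 1 ⟨zero_le_one, le_rfl, le_rfl⟩ 0)

lemma congr (hF : HasMajorant m n A F)
    (h : ∀ ξ η, (ξ, η) ∈ Tri → ∀ t ∈ Ioo (0 : ℝ) 1, H ξ η t = F ξ η t) : HasMajorant m n A H := by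
  obtain ⟨a, hc, hb, hs⟩ := hF
  exact ⟨a, hc, hb, fun ξ η hT t ht => h ξ η hT t ht ▸ hs ξ η hT t ht⟩

lemma mono (hF : HasMajorant m n A F) (hAB : A ≤ B) : HasMajorant m n B F := by
  obtain ⟨a, hc, hb, hs⟩ := hF
  refine ⟨a, hc, fun ξ η hT k => (hb ξ η hT k).trans ?_, hs⟩
  have := mul_nonneg_of_mem_Tri hT
  gcongr

lemma add (hF : HasMajorant m n A F) (hH : HasMajorant m n B H) :
    HasMajorant m n (A + B) (fun ξ η t => F ξ η t + H ξ η t) := by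
  obtain ⟨a, hac, hab, has⟩ := hF
  obtain ⟨b, hbc, hbb, hbs⟩ := hH
  refine ⟨fun k ξ η => a k ξ η + b k ξ η, fun k => (hac k).add (hbc k), fun ξ η hT k => ?_,
    fun ξ η hT t ht => ?_⟩
  · rw [add_mul, add_mul]
    exact (abs_add_le _ _).trans (add_le_add (hab ξ η hT k) (hbb ξ η hT k))
  · simpa only [add_mul] using (has ξ η hT t ht).add (hbs ξ η hT t ht)

lemma const_mul (hF : HasMajorant m n A F) (hc : |c| ≤ B) :
    HasMajorant m n (B * A) (fun ξ η t => c * F ξ η t) := by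
  obtain ⟨a, hac, hab, has⟩ := hF
  refine ⟨fun k ξ η => c * a k ξ η, fun k => continuousOn_const.mul (hac k), fun ξ η hT k => ?_,
    fun ξ η hT t ht => ?_⟩
  · rw [abs_mul, mul_assoc B, mul_assoc B]
    exact mul_le_mul hc (hab ξ η hT k) (abs_nonneg _) ((abs_nonneg c).trans hc)
  · simpa only [mul_assoc] using (has ξ η hT t ht).mul_left c

lemma neg (hF : HasMajorant m n A F) : HasMajorant m n A (fun ξ η t => -F ξ η t) := by
  simpa using hF.const_mul (c := -1) (B := 1) (by simp)

lemma mul (hE : HasMajorant 0 0 B E) (hF : HasMajorant m n A F) :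
    HasMajorant m (n + 1) (B * A) (fun ξ η t => E ξ η t * F ξ η t) := by
  obtain ⟨b, hbc, hbb, hbs⟩ := hE
  obtain ⟨a, hac, hab, has⟩ := hF
  have hbb' : ∀ ξ η, (ξ, η) ∈ Tri → ∀ k, |b k ξ η| ≤ B := fun ξ η hT k => by
    simpa using hbb ξ η hT k
  refine ⟨fun k ξ η => ∑ p ∈ Finset.HasAntidiagonal.antidiagonal k, b p.1 ξ η * a p.2 ξ η,
    fun k => continuousOn_finsetSum _ fun p _ => (hbc _).mul (hac _), fun ξ η hT k => ?_,
    fun ξ η hT t ht => ?_⟩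
  · rw [mul_assoc B A]
    exact abs_antidiagonal_coeff_le (hbb' ξ η hT) (hab ξ η hT) k
  · have hsb := summable_norm_of_abs_le_choose (hbb ξ η hT) (abs_lt_one_of_mem_Ioo ht)
    have hsa := summable_norm_of_abs_le_choose (hab ξ η hT) (abs_lt_one_of_mem_Ioo ht)
    have h := (summable_norm_sum_mul_antidiagonal_of_summable_norm hsb hsa).of_norm.hasSum
    rw [← tsum_mul_tsum_eq_tsum_sum_antidiagonal_of_summable_norm hsb hsa,
      (hbs ξ η hT t ht).tsum_eq, (has ξ η hT t ht).tsum_eq] at h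
    suffices e : ∀ k, (∑ p ∈ Finset.HasAntidiagonal.antidiagonal k, b p.1 ξ η * a p.2 ξ η) * t ^ k
        = ∑ p ∈ Finset.HasAntidiagonal.antidiagonal k,
          b p.1 ξ η * t ^ p.1 * (a p.2 ξ η * t ^ p.2) by
      simpa only [e] using h
    intro k
    rw [Finset.sum_mul]
    refine Finset.sum_congr rfl fun p hp => ?_
    rw [← Finset.HasAntidiagonal.mem_antidiagonal.1 hp, pow_add]
    ring

lemma exists_hasDerivAt (hF : HasMajorant m n A F) :
    ∃ F' : ℝ → ℝ → ℝ → ℝ, HasMajorant m (n + 1) (((n : ℝ) + 1) * A) F' ∧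
      ∀ ξ η, (ξ, η) ∈ Tri → ∀ t ∈ Ioo (0 : ℝ) 1, HasDerivAt (F ξ η) (F' ξ η t) t := by
  obtain ⟨a, hac, hab, has⟩ := hF
  refine ⟨fun ξ η t => ∑' k : ℕ, ((k : ℝ) + 1) * a (k + 1) ξ η * t ^ k,
    ⟨fun k ξ η => ((k : ℝ) + 1) * a (k + 1) ξ η, fun k => continuousOn_const.mul (hac _),
      fun ξ η hT k => ?_, fun ξ η hT t ht => ?_⟩, fun ξ η hT t ht => ?_⟩
  · rw [mul_assoc _ A]
    exact abs_deriv_coeff_le (hab ξ η hT) k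
  · exact (summable_norm_of_abs_le_choose (abs_deriv_coeff_le (hab ξ η hT))
      (abs_lt_one_of_mem_Ioo ht)).of_norm.hasSum
  · refine (hasDerivAt_tsum_mul_pow (hab ξ η hT) (abs_lt_one_of_mem_Ioo ht)).congr_of_eventuallyEq
      ?_
    filter_upwards [isOpen_Ioo.mem_nhds ht] with r hr
    exact (has ξ η hT r hr).tsum_eq.symm

lemma pT (hF : HasMajorant m n A F) : HasMajorant m (n + 1) (((n : ℝ) + 1) * A) (pT F) := by
  obtain ⟨F', hF', hd⟩ := hF.exists_hasDerivAt
  exact hF'.congr fun ξ η hT t ht => (hd ξ η hT t ht).deriv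

lemma hasDerivAt_pT (hF : HasMajorant m n A F) {ξ η t : ℝ} (hT : (ξ, η) ∈ Tri)
    (ht : t ∈ Ioo (0 : ℝ) 1) : HasDerivAt (F ξ η) (_root_.pT F ξ η t) t := by
  obtain ⟨F', -, hd⟩ := hF.exists_hasDerivAt
  exact (hd ξ η hT t ht).differentiableAt.hasDerivAt

/-- At `t = 0` the two-sided derivative is either the right derivative or the junk value `0`. -/
lemma abs_pT_zero_le (hF : HasMajorant m n A F) {ξ η : ℝ} (hT : (ξ, η) ∈ Tri) :
    |_root_.pT F ξ η 0| ≤ ((n : ℝ) + 1) * A * (ξ * η) ^ m := by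
  have hA := hF.const_nonneg
  obtain ⟨a, hac, hab, has⟩ := hF
  by_cases hd : DifferentiableAt ℝ (F ξ η) 0
  · have hP := hasDerivAt_tsum_mul_pow (hab ξ η hT) (t := 0) (by simp)
    have heq : ∀ t ∈ Ioo (0 : ℝ) 1, F ξ η t = ∑' k, a k ξ η * t ^ k := fun t ht =>
      (has ξ η hT t ht).tsum_eq.symm
    have hev : F ξ η =ᶠ[nhdsWithin 0 (Ioi 0)] fun t => ∑' k, a k ξ η * t ^ k := by
      filter_upwards [Ioo_mem_nhdsGT (zero_lt_one (α := ℝ))] with t ht using heq t ht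
    have h0 : F ξ η 0 = ∑' k, a k ξ η * (0 : ℝ) ^ k :=
      tendsto_nhds_unique (hd.continuousAt.tendsto.mono_left nhdsWithin_le_nhds)
        ((hP.continuousAt.tendsto.mono_left nhdsWithin_le_nhds).congr' hev.symm)
    have hw := (hP.hasDerivWithinAt (s := Ioi 0)).congr_of_eventuallyEq hev h0
    have he := (uniqueDiffWithinAt_Ioi (0 : ℝ)).eq_deriv _ hd.hasDerivAt.hasDerivWithinAt hw
    have hv : ∑' k : ℕ, ((k : ℝ) + 1) * a (k + 1) ξ η * (0 : ℝ) ^ k = a 1 ξ η := by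
      rw [tsum_eq_single 0 fun k hk => by simp [hk]]
      simp
    have hb := hab ξ η hT 1
    rw [← hv, ← he, add_comm 1 n, Nat.choose_succ_self_right] at hb
    push_cast at hb
    exact hb.trans (le_of_eq (by ring))
  · have := mul_nonneg_of_mem_Tri hT
    rw [_root_.pT, deriv_zero_of_not_differentiableAt hd, abs_zero]
    positivity

lemma abs_le (hF : HasMajorant m n A F) {ξ η t : ℝ} (hT : (ξ, η) ∈ Tri) (ht : t ∈ Ioo (0 : ℝ) 1) :
    |F ξ η t| ≤ A * (ξ * η) ^ m * (1 / (1 - t) ^ (n + 1)) := by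
  obtain ⟨a, -, hab, has⟩ := hF
  exact abs_le_of_hasSum_choose (hab ξ η hT) ht (has ξ η hT t ht)

lemma abs_le_of_le (hF : HasMajorant m n A F) {ξ η t t₀ : ℝ} (hT : (ξ, η) ∈ Tri)
    (ht : t ∈ Ioo (0 : ℝ) 1) (htt₀ : t ≤ t₀) (ht₀ : t₀ < 1) :
    |F ξ η t| ≤ A * (1 / (1 - t₀) ^ (n + 1)) := by
  have hA := hF.const_nonneg
  have h1 : 0 < 1 - t₀ := by linarith
  have h2 : 0 < 1 - t := by linarith
  refine (hF.abs_le hT ht).trans (mul_le_mul ?_ (by gcongr) (by positivity) hA)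
  exact mul_le_of_le_one_right hA
    (pow_le_one₀ (mul_nonneg_of_mem_Tri hT) (mul_le_one_of_mem_Tri hT))

lemma abs_coeff_mul_pow_le {a : ℕ → ℝ → ℝ → ℝ} (hA : 0 ≤ A)
    (hab : ∀ ξ η, (ξ, η) ∈ Tri → ∀ k, |a k ξ η| ≤ A * (ξ * η) ^ m * ((k + n).choose n : ℝ))
    {ξ η t : ℝ} (hT : (ξ, η) ∈ Tri) (ht : t ∈ Ioo (0 : ℝ) 1) (k : ℕ) :
    |a k ξ η * t ^ k| ≤ A * ((k + n).choose n : ℝ) * t ^ k := by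
  have := pow_le_one₀ (n := m) (mul_nonneg_of_mem_Tri hT) (mul_le_one_of_mem_Tri hT)
  rw [abs_mul, abs_of_nonneg (pow_nonneg ht.1.le k)]
  refine mul_le_mul_of_nonneg_right ((hab ξ η hT k).trans ?_) (pow_nonneg ht.1.le k)
  gcongr
  exact mul_le_of_le_one_right hA this

lemma continuousOn (hF : HasMajorant m n A F) {t : ℝ} (ht : t ∈ Ioo (0 : ℝ) 1) :
    ContinuousOn (fun p : ℝ × ℝ => F p.1 p.2 t) Tri := by
  have hA := hF.const_nonneg
  obtain ⟨a, hac, hab, has⟩ := hF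
  refine (continuousOn_tsum (fun k => (hac k).mul continuousOn_const)
    (hasSum_choose_mul_pow n A (abs_lt_one_of_mem_Ioo ht)).summable
    fun k p hp => abs_coeff_mul_pow_le hA hab hp ht k).congr fun p hp => ?_
  exact (has p.1 p.2 hp t ht).tsum_eq.symm

lemma rectangleIntegral (hF : HasMajorant m n A F) :
    HasMajorant (m + 1) n (A / ((m : ℝ) + 1) ^ 2)
      (fun ξ η t => ∫ τ in η..ξ, ∫ s in (0 : ℝ)..η, F τ s t) := by
  have hA := hF.const_nonneg
  obtain ⟨a, hac, hab, has⟩ := hF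
  refine ⟨fun k ξ η => ∫ τ in η..ξ, ∫ s in (0 : ℝ)..η, a k τ s,
    fun k => continuousOn_rectangleIntegral (hac k), fun ξ η hT k => ?_, fun ξ η hT t ht => ?_⟩
  · refine (abs_rectangleIntegral_le hT (A := A * ((k + n).choose n : ℝ)) (m := m) (by positivity)
      fun τ s h => (hab τ s h k).trans (le_of_eq (by ring))).trans (le_of_eq (by ring))
  · have h := hasSum_rectangleIntegral hT (f := fun k τ s => a k τ s * t ^ k)
      (F := fun τ s => F τ s t) (fun k => (hac k).mul continuousOn_const)
      (hasSum_choose_mul_pow n A (abs_lt_one_of_mem_Ioo ht)).summable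
      (fun k τ s h => abs_coeff_mul_pow_le hA hab h ht k) fun τ s h => has τ s h t ht
    simpa only [intervalIntegral.integral_mul_const] using h

lemma of_tsum {d : ℕ → ℝ → ℝ → ℝ} (hd : ∀ k, ContinuousOn (fun p : ℝ × ℝ => d k p.1 p.2) Tri)
    (hb : ∀ k ξ η, (ξ, η) ∈ Tri → |d k ξ η| ≤ A)
    (hF : ∀ ξ η, (ξ, η) ∈ Tri → ∀ t ∈ Ico (0 : ℝ) 1, F ξ η t = ∑' k, d k ξ η * t ^ k) :
    HasMajorant 0 0 A F := by
  refine ⟨d, hd, fun ξ η hT k => by simpa using hb k ξ η hT, fun ξ η hT t ht => ?_⟩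
  rw [hF ξ η hT t (Ioo_subset_Ico_self ht)]
  exact (summable_norm_of_abs_le_choose (n := 0) (C := A) (fun k => by simpa using hb k ξ η hT)
    (abs_lt_one_of_mem_Ioo ht)).of_norm.hasSum

lemma edgeIntegral (hF : HasMajorant 0 0 A F) :
    HasMajorant 0 0 A (fun ξ η t => ∫ τ in η..ξ, F τ 0 t) := by
  have hA := hF.const_nonneg
  obtain ⟨a, hac, hab, has⟩ := hF
  have hmem : ∀ {ξ η τ : ℝ}, (ξ, η) ∈ Tri → τ ∈ Icc η ξ → (τ, (0 : ℝ)) ∈ Tri := fun hT hτ =>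
    ⟨le_rfl, hT.1.trans hτ.1, hτ.2.trans hT.2.2⟩
  set g : ℕ → ℝ → ℝ := fun k τ => a k (triRetract (τ, 0)).1 (triRetract (τ, 0)).2 with hg
  have hgc : ∀ k, Continuous (g k) := fun k =>
    (hac k).comp_continuous (continuous_triRetract.comp (by fun_prop)) fun τ => triRetract_mem _
  have hga : ∀ k τ, (τ, (0 : ℝ)) ∈ Tri → g k τ = a k τ 0 := fun k τ h => by
    simp only [hg, triRetract_eq h]
  have hgb : ∀ k τ, |g k τ| ≤ A := fun k τ =>
    (hab _ _ (triRetract_mem (τ, 0)) k).trans_eq (by simp)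
  refine ⟨fun k ξ η => ∫ τ in η..ξ, g k τ, fun k => ?_, fun ξ η hT k => ?_, fun ξ η hT t ht => ?_⟩
  · have e : ∀ p : ℝ × ℝ, ∫ τ in p.2..p.1, g k τ
        = (∫ τ in (0 : ℝ)..p.1, g k τ) - ∫ τ in (0 : ℝ)..p.2, g k τ := fun p =>
      (integral_interval_sub_left ((hgc k).intervalIntegrable _ _)
        ((hgc k).intervalIntegrable _ _)).symm
    simp only [e]
    have hp : Continuous fun x => ∫ τ in (0 : ℝ)..x, g k τ :=
      continuous_primitive (fun _ _ => (hgc k).intervalIntegrable _ _) 0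
    exact ((hp.comp continuous_fst).sub (hp.comp continuous_snd)).continuousOn
  · have h := norm_integral_le_of_norm_le_const (a := η) (b := ξ) (f := g k) (C := A)
      fun τ _ => hgb k τ
    have h1 : |ξ - η| ≤ 1 := by
      rw [abs_of_nonneg (sub_nonneg.2 hT.2.1)]
      linarith [hT.1, hT.2.2]
    simpa using h.trans (mul_le_of_le_one_right hA h1)
  · have h := hasSum_intervalIntegral_of_norm_le (a := η) (b := ξ)
      (f := fun k τ => g k τ * t ^ k) (fun k => (hgc k).mul continuous_const)
      (hasSum_choose_mul_pow 0 A (abs_lt_one_of_mem_Ioo ht)).summable fun k τ =>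
        abs_coeff_mul_pow_le hA hab (triRetract_mem (τ, 0)) ht k
    have e : ∫ τ in η..ξ, ∑' k, g k τ * t ^ k = ∫ τ in η..ξ, F τ 0 t := by
      refine integral_congr fun τ hτ => ?_
      rw [uIcc_of_le hT.2.1] at hτ
      simp only [hga _ τ (hmem hT hτ), (has τ 0 (hmem hT hτ) t ht).tsum_eq]
    simpa only [intervalIntegral.integral_mul_const, e] using h

end HasMajorant

/-! ### The Volterra recursion -/

/-- The integrand `(E + p ∂ₜ)H + (E_c + q ∂ₜ)H_c` of the Volterra equations. -/
noncomputable def volterraIntegrand (p q : ℝ) (E Ec H Hc : ℝ → ℝ → ℝ → ℝ) (τ s t : ℝ) : ℝ :=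
  (E τ s t * H τ s t + p * pT H τ s t) + (Ec τ s t * Hc τ s t + q * pT Hc τ s t)

/-- The constant in the majorant of the `n`-th iterate. -/
noncomputable def iterateConst (N : ℝ) (n : ℕ) : ℝ := 4 ^ n * N ^ (n + 1) / (n.factorial : ℝ)

lemma iterateConst_nonneg {N : ℝ} (hN : 0 ≤ N) (n : ℕ) : 0 ≤ iterateConst N n := by
  unfold iterateConst; positivity

lemma iterateConst_step {N : ℝ} (hN : 0 ≤ N) (n : ℕ) :
    (2 * (n : ℝ) + 4) * (N * iterateConst N n) / ((n : ℝ) + 1) ^ 2 ≤ iterateConst N (n + 1) := by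
  have hA := iterateConst_nonneg hN n
  have e : iterateConst N (n + 1)
      = (4 * ((n : ℝ) + 1)) * (N * iterateConst N n) / ((n : ℝ) + 1) ^ 2 := by
    unfold iterateConst
    rw [Nat.factorial_succ]
    push_cast
    field_simp
    ring
  rw [e]
  gcongr
  linarith [(Nat.cast_nonneg n : (0 : ℝ) ≤ n)]

lemma iterateConst_mul_eq (N r x : ℝ) (n : ℕ) :
    iterateConst N n * x ^ n * (1 / r ^ (n + 1))
      = N / r * ((N / r * (4 * x)) ^ n / (n.factorial : ℝ)) := by
  unfold iterateConst
  rw [mul_pow, mul_pow, div_pow, pow_succ N, pow_succ r]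
  field_simp

lemma summable_iterateConst (N r : ℝ) :
    Summable fun n => iterateConst N n * (1 / r ^ (n + 1)) := by
  have h := (Real.summable_pow_div_factorial (N / r * (4 * 1))).mul_left (N / r)
  simp only [← iterateConst_mul_eq] at h
  simpa only [one_pow, mul_one] using h

lemma summable_succ_mul_iterateConst {N r : ℝ} (hN : 0 ≤ N) (hr : 0 < r) :
    Summable fun n : ℕ => ((n : ℝ) + 1) * iterateConst N n * (1 / r ^ (n + 1 + 1)) := by
  refine .of_nonneg_of_le (fun n => ?_) (fun n => ?_)
    (((Real.summable_pow_div_factorial (N / r * (4 * 2))).mul_left (N / r)).mul_right (1 / r))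
  · have := iterateConst_nonneg hN n
    positivity
  · rw [← iterateConst_mul_eq]
    have h2 : (n : ℝ) + 1 ≤ 2 ^ n := by exact_mod_cast Nat.lt_two_pow_self (n := n)
    have := iterateConst_nonneg hN n
    calc ((n : ℝ) + 1) * iterateConst N n * (1 / r ^ (n + 1 + 1))
        ≤ 2 ^ n * iterateConst N n * (1 / r ^ (n + 1 + 1)) := by gcongr
      _ = _ := by rw [pow_succ r (n + 1)]; field_simp

section Recursion

variable {p q N : ℝ} {E Ec : ℝ → ℝ → ℝ → ℝ}

lemma HasMajorant.volterraIntegrand {n : ℕ} {A : ℝ} {H Hc : ℝ → ℝ → ℝ → ℝ} (hp : |p| ≤ N)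
    (hq : |q| ≤ N) (hE : HasMajorant 0 0 N E) (hEc : HasMajorant 0 0 N Ec)
    (hH : HasMajorant n n A H) (hHc : HasMajorant n n A Hc) :
    HasMajorant n (n + 1) ((2 * (n : ℝ) + 4) * (N * A)) (volterraIntegrand p q E Ec H Hc) :=
  (((hE.mul hH).add (hH.pT.const_mul hp)).add ((hEc.mul hHc).add (hHc.pT.const_mul hq))).mono
    (le_of_eq (by ring))

lemma HasMajorant.iterate_step {n : ℕ} {H Hc K : ℝ → ℝ → ℝ → ℝ} (hN : 0 ≤ N) (hp : |p| ≤ N)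
    (hq : |q| ≤ N) (hE : HasMajorant 0 0 N E) (hEc : HasMajorant 0 0 N Ec)
    (hH : HasMajorant n n (iterateConst N n) H) (hHc : HasMajorant n n (iterateConst N n) Hc)
    (hK : ∀ ξ η t, K ξ η t
      = ∫ τ in η..ξ, ∫ s in (0 : ℝ)..η, _root_.volterraIntegrand p q E Ec H Hc τ s t) :
    HasMajorant (n + 1) (n + 1) (iterateConst N (n + 1)) K :=
  ((hE.volterraIntegrand hp hq hEc hH hHc).rectangleIntegral.congr
    fun ξ η _ t _ => hK ξ η t).mono (iterateConst_step hN n)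

lemma abs_iterate_step_zero_le {n : ℕ} {H Hc : ℝ → ℝ → ℝ → ℝ} (hN : 0 ≤ N) (hp : |p| ≤ N)
    (hq : |q| ≤ N) (hE : ∀ ξ η, (ξ, η) ∈ Tri → |E ξ η 0| ≤ N)
    (hEc : ∀ ξ η, (ξ, η) ∈ Tri → |Ec ξ η 0| ≤ N)
    (hH : HasMajorant n n (iterateConst N n) H) (hHc : HasMajorant n n (iterateConst N n) Hc)
    (hH0 : ∀ ξ η, (ξ, η) ∈ Tri → |H ξ η 0| ≤ iterateConst N n * (ξ * η) ^ n)
    (hHc0 : ∀ ξ η, (ξ, η) ∈ Tri → |Hc ξ η 0| ≤ iterateConst N n * (ξ * η) ^ n)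
    {ξ η : ℝ} (hT : (ξ, η) ∈ Tri) :
    |∫ τ in η..ξ, ∫ s in (0 : ℝ)..η, volterraIntegrand p q E Ec H Hc τ s 0|
      ≤ iterateConst N (n + 1) * (ξ * η) ^ (n + 1) := by
  have hA := iterateConst_nonneg hN n
  refine (abs_rectangleIntegral_le hT (A := (2 * (n : ℝ) + 4) * (N * iterateConst N n)) (m := n)
    (by positivity) fun τ s h => ?_).trans (mul_le_mul_of_nonneg_right (iterateConst_step hN n)
      (pow_nonneg (mul_nonneg_of_mem_Tri hT) _))
  have hm : ∀ {x y X Y : ℝ}, |x| ≤ X → |y| ≤ Y → |x * y| ≤ X * Y := fun {x y X Y} hx hy => by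
    rw [abs_mul]
    exact mul_le_mul hx hy (abs_nonneg _) ((abs_nonneg _).trans hx)
  have h1 := hm (hE τ s h) (hH0 τ s h)
  have h2 := hm hp (hH.abs_pT_zero_le h)
  have h3 := hm (hEc τ s h) (hHc0 τ s h)
  have h4 := hm hq (hHc.abs_pT_zero_le h)
  calc |volterraIntegrand p q E Ec H Hc τ s 0|
      ≤ _ := (abs_add_le _ _).trans (add_le_add (abs_add_le _ _) (abs_add_le _ _))
    _ ≤ _ := add_le_add (add_le_add h1 h2) (add_le_add h3 h4)
    _ = _ := by ring

variable {H Hc K : ℕ → ℝ → ℝ → ℝ → ℝ}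

lemma hasSum_iterates (hH : ∀ n, HasMajorant n n (iterateConst N n) (H n)) {ξ η t : ℝ}
    (hT : (ξ, η) ∈ Tri) (ht : t ∈ Ioo (0 : ℝ) 1) :
    HasSum (fun n => H n ξ η t) (∑' n, H n ξ η t) :=
  (Summable.of_norm_bounded (summable_iterateConst N (1 - t)) fun n =>
    (hH n).abs_le_of_le hT ht le_rfl ht.2).hasSum

lemma hasSum_pT_iterates (hN : 0 ≤ N) (hH : ∀ n, HasMajorant n n (iterateConst N n) (H n))
    {ξ η t : ℝ} (hT : (ξ, η) ∈ Tri) (ht : t ∈ Ioo (0 : ℝ) 1) :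
    HasSum (fun n => pT (H n) ξ η t) (pT (fun ξ η t => ∑' n, H n ξ η t) ξ η t) := by
  obtain ⟨t₁, htt₁, ht₁⟩ := exists_between ht.2
  have hu := summable_succ_mul_iterateConst hN (sub_pos.2 ht₁)
  have hmem : ∀ {r}, r ∈ Ioo 0 t₁ → r ∈ Ioo (0 : ℝ) 1 := fun hr => ⟨hr.1, hr.2.trans ht₁⟩
  have hb : ∀ n, ∀ r ∈ Ioo 0 t₁, ‖pT (H n) ξ η r‖
      ≤ ((n : ℝ) + 1) * iterateConst N n * (1 / (1 - t₁) ^ (n + 1 + 1)) := fun n r hr =>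
    (hH n).pT.abs_le_of_le hT (hmem hr) hr.2.le ht₁
  have hd := hasDerivAt_tsum_of_isPreconnected hu isOpen_Ioo isPreconnected_Ioo
    (fun n r hr => (hH n).hasDerivAt_pT hT (hmem hr)) hb ⟨ht.1, htt₁⟩
    (hasSum_iterates hH hT ht).summable ⟨ht.1, htt₁⟩
  have hs := (Summable.of_norm_bounded hu fun n => hb n t ⟨ht.1, htt₁⟩).hasSum
  rwa [← hd.deriv] at hs

lemma tsum_iterates_eq (hN : 0 ≤ N) (hp : |p| ≤ N) (hq : |q| ≤ N)
    (hE : HasMajorant 0 0 N E) (hEc : HasMajorant 0 0 N Ec)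
    (hH : ∀ n, HasMajorant n n (iterateConst N n) (H n))
    (hHc : ∀ n, HasMajorant n n (iterateConst N n) (Hc n))
    (hK : ∀ n, HasMajorant n n (iterateConst N n) (K n))
    (hrec : ∀ n ξ η t, K (n + 1) ξ η t
      = ∫ τ in η..ξ, ∫ s in (0 : ℝ)..η, volterraIntegrand p q E Ec (H n) (Hc n) τ s t)
    {ξ η t : ℝ} (hT : (ξ, η) ∈ Tri) (ht : t ∈ Ioo (0 : ℝ) 1) :
    ∑' n, K n ξ η t = K 0 ξ η t + ∫ τ in η..ξ, ∫ s in (0 : ℝ)..η,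
      volterraIntegrand p q E Ec (fun ξ η t => ∑' n, H n ξ η t)
        (fun ξ η t => ∑' n, Hc n ξ η t) τ s t := by
  rw [(hasSum_iterates hK hT ht).summable.tsum_eq_zero_add]
  simp only [hrec]
  congr 1
  have hmaj := fun n => hE.volterraIntegrand hp hq hEc (hH n) (hHc n)
  have hr : 0 < 1 - t := sub_pos.2 ht.2
  have hu : Summable fun n : ℕ =>
      (2 * (n : ℝ) + 4) * (N * iterateConst N n) * (1 / (1 - t) ^ (n + 1 + 1)) := by
    refine .of_nonneg_of_le (fun n => ?_) (fun n => ?_)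
      ((summable_succ_mul_iterateConst hN hr).mul_left (4 * N))
    · have := iterateConst_nonneg hN n
      positivity
    · have := iterateConst_nonneg hN n
      calc _ ≤ (4 * ((n : ℝ) + 1)) * (N * iterateConst N n) * (1 / (1 - t) ^ (n + 1 + 1)) := by
            gcongr
            linarith [(Nat.cast_nonneg n : (0 : ℝ) ≤ n)]
        _ = _ := by ring
  refine (hasSum_rectangleIntegral hT (fun n => (hmaj n).continuousOn ht) hu
    (fun n τ s h => (hmaj n).abs_le_of_le h ht le_rfl ht.2) fun τ s h => ?_).tsum_eq
  exact (((hasSum_iterates hH h ht).mul_left _).add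
    ((hasSum_pT_iterates hN hH h ht).mul_left _)).add
    (((hasSum_iterates hHc h ht).mul_left _).add ((hasSum_pT_iterates hN hHc h ht).mul_left _))

lemma abs_tsum_iterates_le (hH : ∀ n, HasMajorant n n (iterateConst N n) (H n)) {ξ η t t₀ : ℝ}
    (hN : 0 ≤ N) (hT : (ξ, η) ∈ Tri) (ht : t ∈ Ioo (0 : ℝ) t₀) (ht₀ : t₀ < 1) :
    |∑' n, H n ξ η t| ≤ N / (1 - t₀) * Real.exp (N / (1 - t₀) * (4 * (ξ * η))) := by
  have hs := (NormedSpace.expSeries_div_hasSum_exp (N / (1 - t₀) * (4 * (ξ * η)))).mul_left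
    (N / (1 - t₀))
  rw [← Real.exp_eq_exp_ℝ] at hs
  rw [← Real.norm_eq_abs]
  refine tsum_of_norm_bounded hs fun n => ?_
  rw [← iterateConst_mul_eq]
  have h1 := mul_nonneg_of_mem_Tri hT
  have h2 := iterateConst_nonneg hN n
  have h3 : 0 < 1 - t₀ := sub_pos.2 ht₀
  have h4 : 1 - t₀ ≤ 1 - t := by linarith [ht.2]
  exact ((hH n).abs_le hT ⟨ht.1, ht.2.trans ht₀⟩).trans (by gcongr)

lemma abs_iterate_le (hN : 0 ≤ N) (hH : ∀ n, HasMajorant n n (iterateConst N n) (H n))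
    (hH0 : ∀ n ξ η, (ξ, η) ∈ Tri → |H n ξ η 0| ≤ iterateConst N n * (ξ * η) ^ n)
    {ξ η t t₀ : ℝ} (hT : (ξ, η) ∈ Tri) (ht : t ∈ Icc (0 : ℝ) t₀) (ht₀ : t₀ < 1) (n : ℕ) :
    |H n ξ η t| ≤ iterateConst N n * (1 / (1 - t₀) ^ (n + 1)) := by
  rcases ht.1.eq_or_lt with rfl | h0
  · refine (hH0 n ξ η hT).trans (mul_le_mul_of_nonneg_left ?_ (iterateConst_nonneg hN n))
    refine (pow_le_one₀ (mul_nonneg_of_mem_Tri hT) (mul_le_one_of_mem_Tri hT)).trans ?_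
    exact one_le_one_div (pow_pos (sub_pos.2 ht₀) _)
      (pow_le_one₀ (sub_pos.2 ht₀).le (by linarith [ht.2]))
  · exact (hH n).abs_le_of_le hT ⟨h0, ht.2.trans_lt ht₀⟩ ht.2 ht₀

end Recursion

lemma abs_tsum_zero_le {d : ℕ → ℝ → ℝ → ℝ} {F : ℝ → ℝ → ℝ → ℝ} {N : ℝ}
    (hb : ∀ k ξ η, (ξ, η) ∈ Tri → |d k ξ η| ≤ N)
    (hF : ∀ ξ η, (ξ, η) ∈ Tri → ∀ t ∈ Ico (0 : ℝ) 1, F ξ η t = ∑' k, d k ξ η * t ^ k)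
    {ξ η : ℝ} (hT : (ξ, η) ∈ Tri) : |F ξ η 0| ≤ N := by
  rw [hF ξ η hT 0 ⟨le_rfl, zero_lt_one⟩, tsum_eq_single 0 fun k hk => by simp [hk]]
  simpa using hb 0 ξ η hT

lemma abs_edgeIntegral_zero_le {F : ℝ → ℝ → ℝ → ℝ} {N c : ℝ} (hc : |c| ≤ 1)
    (hF : ∀ ξ η, (ξ, η) ∈ Tri → |F ξ η 0| ≤ N) {ξ η : ℝ} (hT : (ξ, η) ∈ Tri) :
    |c * ∫ τ in η..ξ, F τ 0 0| ≤ N := by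
  have hN : 0 ≤ N := (abs_nonneg _).trans (hF ξ η hT)
  have h : ‖∫ τ in η..ξ, F τ 0 0‖ ≤ N * |ξ - η| := norm_integral_le_of_norm_le_const fun τ hτ => by
    rw [uIoc_of_le hT.2.1] at hτ
    exact hF τ 0 ⟨le_rfl, hT.1.trans hτ.1.le, hτ.2.trans hT.2.2⟩
  have h1 : |ξ - η| ≤ 1 := by
    rw [abs_of_nonneg (sub_nonneg.2 hT.2.1)]
    linarith [hT.1, hT.2.2]
  rw [abs_mul]
  exact (mul_le_of_le_one_left (abs_nonneg _) hc).trans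
    (h.trans (mul_le_of_le_one_right hN h1))

/-- the successive-approximation series `ΣGₙ`, `ΣG_{c,n}` converge
absolutely and uniformly on `T' × [0,t₀]` for every `t₀ ∈ (0,1)`, their sums solve the
Volterra-type integral equations, and the corresponding kernels
`k(x,y,t) = G((x+y)/2,(x−y)/2,t)`, `k_c(x,y,t) = G_c((x+y)/2,(x−y)/2,t)` satisfy the
exponential bound `M e^{M(x²−y²)}` with `M = N/(1−t₀)`. -/
theorem successive_approximation_series_converges_and_kernel_bound
    (p₁ p₂ q₁ q₂ N : ℝ)
    (hN1 : 1 ≤ N) (hNp₁ : |p₁| ≤ N) (hNp₂ : |p₂| ≤ N) (hNq₁ : |q₁| ≤ N) (hNq₂ : |q₂| ≤ N)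
    (δ δc : ℝ → ℝ → ℝ → ℝ)
    (dcoef dccoef : ℕ → ℝ → ℝ → ℝ)
    (hdcont : ∀ n, ContinuousOn (fun p : ℝ × ℝ => dcoef n p.1 p.2) Tri)
    (hdccont : ∀ n, ContinuousOn (fun p : ℝ × ℝ => dccoef n p.1 p.2) Tri)
    (hdbd : ∀ n, ∀ ξ η : ℝ, (ξ, η) ∈ Tri → |dcoef n ξ η| ≤ N)
    (hdcbd : ∀ n, ∀ ξ η : ℝ, (ξ, η) ∈ Tri → |dccoef n ξ η| ≤ N)
    (hδ : ∀ ξ η : ℝ, (ξ, η) ∈ Tri → ∀ t ∈ Ico (0:ℝ) 1,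
      δ ξ η t = ∑' n, dcoef n ξ η * t ^ n)
    (hδc : ∀ ξ η : ℝ, (ξ, η) ∈ Tri → ∀ t ∈ Ico (0:ℝ) 1,
      δc ξ η t = ∑' n, dccoef n ξ η * t ^ n)
    (G Gc : ℕ → ℝ → ℝ → ℝ → ℝ)
    (hG0 : ∀ ξ η t : ℝ, G 0 ξ η t = -(1 / 2) * ∫ τ in η..ξ, δ τ 0 t)
    (hGc0 : ∀ ξ η t : ℝ, Gc 0 ξ η t = (1 / 2) * ∫ τ in η..ξ, δc τ 0 t)
    (hGrec : ∀ n, ∀ ξ η t : ℝ,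
      G (n + 1) ξ η t
        = ∫ τ in η..ξ, ∫ s in (0:ℝ)..η,
            ((δ τ s t * G n τ s t + p₁ * pT (G n) τ s t)
              + (δc τ s t * Gc n τ s t + p₂ * pT (Gc n) τ s t)))
    (hGcrec : ∀ n, ∀ ξ η t : ℝ,
      Gc (n + 1) ξ η t
        = ∫ τ in η..ξ, ∫ s in (0:ℝ)..η,
            ((δ τ s t * Gc n τ s t + q₁ * pT (Gc n) τ s t)
              + (-δc τ s t * G n τ s t + q₂ * pT (G n) τ s t)))
    (t₀ : ℝ) (ht₀ : t₀ ∈ Ioo (0:ℝ) 1)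
    (Gsum Gcsum : ℝ → ℝ → ℝ → ℝ)
    (hGsum : ∀ ξ η t : ℝ, Gsum ξ η t = ∑' n, G n ξ η t)
    (hGcsum : ∀ ξ η t : ℝ, Gcsum ξ η t = ∑' n, Gc n ξ η t)
    (M : ℝ) (hM : M = N / (1 - t₀)) :
    -- absolute convergence on T' × [0,t₀]
    (∀ ξ η : ℝ, (ξ, η) ∈ Tri → ∀ t ∈ Icc (0:ℝ) t₀,
        Summable (fun n => |G n ξ η t|) ∧ Summable (fun n => |Gc n ξ η t|))
    -- uniform convergence on T' × [0,t₀]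
    ∧ TendstoUniformlyOn
        (fun m : ℕ => fun p : (ℝ × ℝ) × ℝ => ∑ n ∈ Finset.range m, G n p.1.1 p.1.2 p.2)
        (fun p : (ℝ × ℝ) × ℝ => Gsum p.1.1 p.1.2 p.2) atTop (Tri ×ˢ Icc (0:ℝ) t₀)
    ∧ TendstoUniformlyOn
        (fun m : ℕ => fun p : (ℝ × ℝ) × ℝ => ∑ n ∈ Finset.range m, Gc n p.1.1 p.1.2 p.2)
        (fun p : (ℝ × ℝ) × ℝ => Gcsum p.1.1 p.1.2 p.2) atTop (Tri ×ˢ Icc (0:ℝ) t₀)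
    -- the sums satisfy the integral equations
    ∧ (∀ ξ η : ℝ, (ξ, η) ∈ Tri → ∀ t ∈ Ioo (0:ℝ) t₀,
        Gsum ξ η t
          = G 0 ξ η t
            + ∫ τ in η..ξ, ∫ s in (0:ℝ)..η,
                ((δ τ s t * Gsum τ s t + p₁ * pT Gsum τ s t)
                  + (δc τ s t * Gcsum τ s t + p₂ * pT Gcsum τ s t))
        ∧ Gcsum ξ η t
          = Gc 0 ξ η t
            + ∫ τ in η..ξ, ∫ s in (0:ℝ)..η,
                ((δ τ s t * Gcsum τ s t + q₁ * pT Gcsum τ s t)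
                  + (-δc τ s t * Gsum τ s t + q₂ * pT Gsum τ s t)))
    -- exponential bound on the kernels in the original variables
    ∧ (∀ x y : ℝ, 0 ≤ y → y ≤ x → x ≤ 1 → ∀ t ∈ Ioo (0:ℝ) t₀,
        |Gsum ((x + y) / 2) ((x - y) / 2) t| ≤ M * Real.exp (M * (x ^ 2 - y ^ 2))
        ∧ |Gcsum ((x + y) / 2) ((x - y) / 2) t| ≤ M * Real.exp (M * (x ^ 2 - y ^ 2))) := by
  have hN : 0 ≤ N := zero_le_one.trans hN1
  have hE : HasMajorant 0 0 N δ := .of_tsum hdcont hdbd hδ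
  have hEc : HasMajorant 0 0 N δc := .of_tsum hdccont hdcbd hδc
  have hE0 : ∀ ξ η, (ξ, η) ∈ Tri → |δ ξ η 0| ≤ N := fun _ _ => abs_tsum_zero_le hdbd hδ
  have hEc0 : ∀ ξ η, (ξ, η) ∈ Tri → |δc ξ η 0| ≤ N := fun _ _ => abs_tsum_zero_le hdcbd hδc
  have hEc0' : ∀ ξ η, (ξ, η) ∈ Tri → |-δc ξ η 0| ≤ N := fun ξ η h => by
    rw [abs_neg]
    exact hEc0 ξ η h
  have hconst : iterateConst N 0 = N := by simp [iterateConst]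
  have hmaj : ∀ n, HasMajorant n n (iterateConst N n) (G n)
      ∧ HasMajorant n n (iterateConst N n) (Gc n) := fun n => by
    induction n with
    | zero =>
      rw [hconst]
      constructor
      · exact ((hE.edgeIntegral.const_mul (c := -(1 / 2)) (B := 1) (by norm_num [abs_le])).congr
          fun ξ η _ t _ => hG0 ξ η t).mono (one_mul N).le
      · exact ((hEc.edgeIntegral.const_mul (c := 1 / 2) (B := 1) (by norm_num [abs_le])).congr
          fun ξ η _ t _ => hGc0 ξ η t).mono (one_mul N).le
    | succ n ih =>
      exact ⟨.iterate_step hN hNp₁ hNp₂ hE hEc ih.1 ih.2 (hGrec n),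
        .iterate_step hN hNq₁ hNq₂ hE hEc.neg ih.2 ih.1 (hGcrec n)⟩
  have hzero : ∀ n, (∀ ξ η, (ξ, η) ∈ Tri → |G n ξ η 0| ≤ iterateConst N n * (ξ * η) ^ n)
      ∧ ∀ ξ η, (ξ, η) ∈ Tri → |Gc n ξ η 0| ≤ iterateConst N n * (ξ * η) ^ n := fun n => by
    induction n with
    | zero =>
      simp only [hconst, pow_zero, mul_one]
      constructor <;> intro ξ η h
      · rw [hG0]
        exact abs_edgeIntegral_zero_le (by norm_num [abs_le]) hE0 h
      · rw [hGc0]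
        exact abs_edgeIntegral_zero_le (by norm_num [abs_le]) hEc0 h
    | succ n ih =>
      constructor <;> intro ξ η h
      · rw [hGrec]
        exact abs_iterate_step_zero_le hN hNp₁ hNp₂ hE0 hEc0 (hmaj n).1 (hmaj n).2 ih.1 ih.2 h
      · rw [hGcrec]
        exact abs_iterate_step_zero_le (Ec := fun ξ η t => -δc ξ η t) hN hNq₁ hNq₂ hE0 hEc0'
          (hmaj n).2 (hmaj n).1 ih.2 ih.1 h
  obtain rfl : Gsum = fun ξ η t => ∑' n, G n ξ η t := by
    funext ξ η t
    exact hGsum ξ η t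
  obtain rfl : Gcsum = fun ξ η t => ∑' n, Gc n ξ η t := by
    funext ξ η t
    exact hGcsum ξ η t
  have hG := fun n => (hmaj n).1
  have hGc := fun n => (hmaj n).2
  have hGle := @abs_iterate_le N G hN hG fun n => (hzero n).1
  have hGcle := @abs_iterate_le N Gc hN hGc fun n => (hzero n).2
  have hu := summable_iterateConst N (1 - t₀)
  refine ⟨fun ξ η hT t ht => ⟨?_, ?_⟩, ?_, ?_, fun ξ η hT t ht => ⟨?_, ?_⟩,
    fun x y hy hyx hx t ht => ?_⟩
  · exact .of_nonneg_of_le (fun _ => abs_nonneg _) (hGle hT ht ht₀.2) hu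
  · exact .of_nonneg_of_le (fun _ => abs_nonneg _) (hGcle hT ht ht₀.2) hu
  · exact tendstoUniformlyOn_tsum_nat hu fun n z hz => hGle hz.1 hz.2 ht₀.2 n
  · exact tendstoUniformlyOn_tsum_nat hu fun n z hz => hGcle hz.1 hz.2 ht₀.2 n
  · exact tsum_iterates_eq hN hNp₁ hNp₂ hE hEc hG hGc hG hGrec hT ⟨ht.1, ht.2.trans ht₀.2⟩
  · exact tsum_iterates_eq hN hNq₁ hNq₂ hE hEc.neg hGc hG hGc hGcrec hT
      ⟨ht.1, ht.2.trans ht₀.2⟩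
  · have hT : ((x + y) / 2, (x - y) / 2) ∈ Tri :=
      ⟨by simp only; linarith, by simp only; linarith, by simp only; linarith⟩
    have e : x ^ 2 - y ^ 2 = 4 * ((x + y) / 2 * ((x - y) / 2)) := by ring
    rw [hM, e]
    exact ⟨abs_tsum_iterates_le hG hN hT ht ht₀.2, abs_tsum_iterates_le hGc hN hT ht ht₀.2⟩
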